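/- (Anisotropic Sobolev embedding) Let u,v be smooth functions on [0,2π]×[r_0,1], 2π-periodic in θ, with u=v=0 on r=1 and r=r_0. Then ‖(u,v)‖_{L^∞} ≤ C(‖(u_θ,v_θ)‖_{L²}+‖(u_r,v_r)‖_{L²}+‖(u_{rθ},v_{rθ})‖_{L²}), where norms are taken over Ω=[0,2π]×[r_0,1]. -/

import Mathlib

/-!
On each circle `u(·, r)` is bounded by the one-dimensional Sobolev inequality, that is, by the `L²`
norms of `u(·, r)` and `u_θ(·, r)`. Since `u` and `u_θ` vanish for `r = r₀`, each of these norms is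
in turn bounded, uniformly in `r`, by the `L²(Ω)` norm of the radial derivative of the function,
through the fundamental theorem of calculus and Jensen's inequality.
-/

open Real MeasureTheory Filter Set

noncomputable section

/-- Partial derivative in the first (angular) variable. -/
def Dθ (u : ℝ → ℝ → ℝ) : ℝ → ℝ → ℝ := fun x y => deriv (fun t => u t y) x

/-- Partial derivative in the second (radial / boundary-layer) variable. -/
def Dr (u : ℝ → ℝ → ℝ) : ℝ → ℝ → ℝ := fun x y => deriv (fun s => u x s) y

/-- Joint smoothness of a function of two real variables. -/
def Smooth2 (u : ℝ → ℝ → ℝ) : Prop := ContDiff ℝ (⊤ : ℕ∞) (fun q : ℝ × ℝ => u q.1 q.2)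

/-- `2π`-periodicity in the first (angular) variable. -/
def Periodic2 (u : ℝ → ℝ → ℝ) : Prop := ∀ x y, u (x + 2 * π) y = u x y

/-- The profile `ũ_e(r) = ã₀ r + b̃₀/r + c̃₀ r ln r`. -/
def tildeU (ta tb tc : ℝ) : ℝ → ℝ := fun r => ta * r + tb / r + tc * r * Real.log r

/-- The shear Euler profile `u_{e,δ}(r) = a₀ r + b₀/r + δ ũ_e(r)`. -/
def shearProfile (a0 b0 δ ta tb tc : ℝ) : ℝ → ℝ :=
  fun r => a0 * r + b0 / r + δ * tildeU ta tb tc r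

/-- Double integral over the annulus domain `Ω = [0,2π] × [r₀,1]`. -/
def dblInt (r0 : ℝ) (F : ℝ → ℝ → ℝ) : ℝ :=
  ∫ r in r0..(1:ℝ), ∫ θ in (0:ℝ)..(2 * π), F θ r

section Interval

variable {E : Type*} [NormedAddCommGroup E] [NormedSpace ℝ E] [CompleteSpace E]

theorem norm_integral_sq_le {α : Type*} [MeasurableSpace α] {μ : Measure α} [IsFiniteMeasure μ]
    {f : α → E} (hf : MemLp f 2 μ) :
    ‖∫ x, f x ∂μ‖ ^ 2 ≤ μ.real univ * ∫ x, ‖f x‖ ^ 2 ∂μ := by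
  rcases eq_zero_or_neZero μ with rfl | _
  · simp
  have hm : 0 < μ.real univ := measureReal_univ_pos
  have jensen : ‖⨍ x, f x ∂μ‖ ^ 2 ≤ ⨍ x, ‖f x‖ ^ 2 ∂μ :=
    (convexOn_univ_norm.pow (fun _ _ => norm_nonneg _) 2).map_average_le
      (continuous_norm.pow 2).continuousOn isClosed_univ (.of_forall fun _ => mem_univ _)
      (hf.integrable one_le_two) hf.norm.integrable_sq
  rw [average_eq, average_eq, norm_smul, norm_inv, norm_of_nonneg hm.le, smul_eq_mul, mul_pow]
    at jensen
  field_simp at jensen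
  exact jensen

variable {f f' : ℝ → E} {a b x y : ℝ}

theorem norm_sub_sq_le_mul_integral_norm_deriv_sq (hf : ∀ t ∈ Icc a b, HasDerivAt f (f' t) t)
    (hf' : ContinuousOn f' (Icc a b)) (hx : x ∈ Icc a b) (hy : y ∈ Icc a b) :
    ‖f y - f x‖ ^ 2 ≤ (b - a) * ∫ t in a..b, ‖f' t‖ ^ 2 := by
  have hab : a ≤ b := hx.1.trans hx.2
  have huIcc : uIcc x y ⊆ Icc a b := uIcc_subset_Icc hx hy
  have huIoc : uIoc x y ⊆ Ioc a b := Ioc_subset_Ioc (le_min hx.1 hy.1) (max_le hx.2 hy.2)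
  have hf'_sq : IntegrableOn (fun t => ‖f' t‖ ^ 2) (Icc a b) := (hf'.norm.pow 2).integrableOn_Icc
  have : IsFiniteMeasure (volume.restrict (uIoc x y)) := isFiniteMeasure_restrict_Ioc _ _
  have hf'_memLp : MemLp f' 2 (volume.restrict (uIoc x y)) :=
    (memLp_two_iff_integrable_sq_norm
      ((hf'.aestronglyMeasurable measurableSet_Icc).mono_set (huIoc.trans Ioc_subset_Icc_self))).2
      (hf'_sq.mono_set (huIoc.trans Ioc_subset_Icc_self))
  have ftc : ∫ t in x..y, f' t = f y - f x :=
    intervalIntegral.integral_eq_sub_of_hasDerivAt (fun t ht => hf t (huIcc ht))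
      (hf'.mono huIcc).intervalIntegrable
  calc ‖f y - f x‖ ^ 2 = ‖∫ t in uIoc x y, f' t‖ ^ 2 := by
        rw [← ftc, intervalIntegral.norm_integral_eq_norm_integral_uIoc]
    _ ≤ volume.real (uIoc x y) * ∫ t in uIoc x y, ‖f' t‖ ^ 2 := by
        simpa only [measureReal_restrict_apply_univ] using norm_integral_sq_le hf'_memLp
    _ ≤ volume.real (Ioc a b) * ∫ t in Ioc a b, ‖f' t‖ ^ 2 := by
        refine mul_le_mul (measureReal_mono huIoc measure_Ioc_lt_top.ne) ?_ (by positivity)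
          measureReal_nonneg
        exact setIntegral_mono_set (hf'_sq.mono_set Ioc_subset_Icc_self)
          (.of_forall fun t => by positivity) huIoc.eventuallyLE
    _ = (b - a) * ∫ t in a..b, ‖f' t‖ ^ 2 := by
        rw [Real.volume_real_Ioc_of_le hab, intervalIntegral.integral_of_le hab]

theorem mul_norm_sq_le_integral_norm_sq_add (hf : ∀ t ∈ Icc a b, HasDerivAt f (f' t) t)
    (hf' : ContinuousOn f' (Icc a b)) (hx : x ∈ Icc a b) :
    (b - a) * ‖f x‖ ^ 2 ≤
      2 * ((∫ t in a..b, ‖f t‖ ^ 2) + (b - a) ^ 2 * ∫ t in a..b, ‖f' t‖ ^ 2) := by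
  have hab : a ≤ b := hx.1.trans hx.2
  have hf_sq : IntervalIntegrable (fun t => ‖f t‖ ^ 2) volume a b :=
    ContinuousOn.intervalIntegrable_of_Icc hab
      ((HasDerivAt.continuousOn hf).norm.pow 2)
  set J := ∫ t in a..b, ‖f' t‖ ^ 2
  have pointwise : ∀ t ∈ Icc a b, ‖f x‖ ^ 2 ≤ 2 * (‖f t‖ ^ 2 + (b - a) * J) := fun t ht =>
    calc ‖f x‖ ^ 2 ≤ (‖f t‖ + ‖f x - f t‖) ^ 2 := by
          gcongr; exact norm_le_norm_add_norm_sub' _ _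
      _ ≤ 2 * (‖f t‖ ^ 2 + ‖f x - f t‖ ^ 2) := add_sq_le
      _ ≤ 2 * (‖f t‖ ^ 2 + (b - a) * J) := by
          gcongr; exact norm_sub_sq_le_mul_integral_norm_deriv_sq hf hf' ht hx
  calc (b - a) * ‖f x‖ ^ 2 = ∫ _ in a..b, ‖f x‖ ^ 2 := by
        rw [intervalIntegral.integral_const, smul_eq_mul]
    _ ≤ ∫ t in a..b, 2 * (‖f t‖ ^ 2 + (b - a) * J) :=
        intervalIntegral.integral_mono_on hab intervalIntegrable_const
          ((hf_sq.add intervalIntegrable_const).const_mul 2) pointwise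
    _ = 2 * ((∫ t in a..b, ‖f t‖ ^ 2) + (b - a) ^ 2 * J) := by
        rw [intervalIntegral.integral_const_mul,
          intervalIntegral.integral_add hf_sq intervalIntegrable_const,
          intervalIntegral.integral_const, smul_eq_mul]
        ring

end Interval

section Rectangle

variable {E : Type*} [NormedAddCommGroup E] [NormedSpace ℝ E] {a b c d : ℝ}

theorem intervalIntegral_swap_of_continuous {F : ℝ → ℝ → E} (hF : Continuous F.uncurry) :
    ∫ x in a..b, ∫ y in c..d, F x y = ∫ y in c..d, ∫ x in a..b, F x y :=
  intervalIntegral_intervalIntegral_swap <|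
    (hF.continuousOn.integrableOn_compact (isCompact_uIcc.prod isCompact_uIcc)).mono_set
      (prod_mono uIoc_subset_uIcc uIoc_subset_uIcc)

theorem integral_norm_sq_le_integral_norm_deriv_sq [CompleteSpace E] {w w' : ℝ → ℝ → E}
    (hab : a ≤ b) (hw : ∀ x, ∀ y ∈ Icc c d, HasDerivAt (w x) (w' x y) y)
    (hw' : Continuous w'.uncurry) (hwc : ∀ x, w x c = 0) {y : ℝ} (hy : y ∈ Icc c d) :
    ∫ x in a..b, ‖w x y‖ ^ 2 ≤ (d - c) * ∫ s in c..d, ∫ x in a..b, ‖w' x s‖ ^ 2 := by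
  have hcont : Continuous fun p : ℝ × ℝ => ‖w' p.1 p.2‖ ^ 2 := hw'.norm.pow 2
  have pointwise : ∀ x, ‖w x y‖ ^ 2 ≤ (d - c) * ∫ s in c..d, ‖w' x s‖ ^ 2 := fun x => by
    simpa only [hwc, sub_zero] using norm_sub_sq_le_mul_integral_norm_deriv_sq (hw x)
      (hw'.uncurry_left x).continuousOn (left_mem_Icc.2 (hy.1.trans hy.2)) hy
  rw [← intervalIntegral_swap_of_continuous (F := fun x s => ‖w' x s‖ ^ 2) hcont,
    ← intervalIntegral.integral_const_mul]
  simp only [intervalIntegral.integral_of_le hab]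
  have hcont_inner : Continuous fun x => ∫ s in c..d, ‖w' x s‖ ^ 2 :=
    intervalIntegral.continuous_parametric_intervalIntegral_of_continuous' hcont c d
  exact integral_mono_of_nonneg (.of_forall fun x => by positivity)
    (hcont_inner.const_mul _).integrableOn_Ioc (.of_forall pointwise)

end Rectangle

section PartialDerivatives

variable {u : ℝ → ℝ → ℝ} {m n : WithTop ℕ∞}

theorem hasDerivAt_Dθ (hu : ContDiff ℝ n u.uncurry) (hn : n ≠ 0) (x y : ℝ) :
    HasDerivAt (fun t => u t y) (Dθ u x y) x :=
  ((hu.comp (contDiff_prodMk_left y)).differentiable hn x).hasDerivAt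

theorem hasDerivAt_Dr (hu : ContDiff ℝ n u.uncurry) (hn : n ≠ 0) (x y : ℝ) :
    HasDerivAt (u x) (Dr u x y) y :=
  ((hu.comp (contDiff_prodMk_right x)).differentiable hn y).hasDerivAt

theorem contDiff_Dθ (hu : ContDiff ℝ n u.uncurry) (hmn : m + 1 ≤ n) :
    ContDiff ℝ m (Dθ u).uncurry :=
  ContDiff.fderiv_apply (f := fun (p : ℝ × ℝ) t => u t p.2) (k := fun _ => 1)
    (hu.comp (contDiff_snd.prodMk contDiff_fst.snd)) contDiff_fst contDiff_const hmn

theorem contDiff_Dr (hu : ContDiff ℝ n u.uncurry) (hmn : m + 1 ≤ n) :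
    ContDiff ℝ m (Dr u).uncurry :=
  ContDiff.fderiv_apply (f := fun (p : ℝ × ℝ) s => u p.1 s) (k := fun _ => 1)
    (hu.comp (contDiff_fst.fst.prodMk contDiff_snd)) contDiff_snd contDiff_const hmn

end PartialDerivatives

theorem sqrt_add_le_add_sqrt {a b : ℝ} (ha : 0 ≤ a) (hb : 0 ≤ b) : √(a + b) ≤ √a + √b := by
  rw [sqrt_le_left (by positivity), add_sq, sq_sqrt ha, sq_sqrt hb]
  linarith [mul_nonneg (sqrt_nonneg a) (sqrt_nonneg b)]

section Annulus

variable {r0 : ℝ} {u v : ℝ → ℝ → ℝ}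

theorem dblInt_nonneg {F : ℝ → ℝ → ℝ} (hr0 : r0 ≤ 1) (hF : ∀ θ r, 0 ≤ F θ r) : 0 ≤ dblInt r0 F :=
  intervalIntegral.integral_nonneg hr0 fun r _ =>
    intervalIntegral.integral_nonneg two_pi_pos.le fun θ _ => hF θ r

theorem dblInt_add {F G : ℝ → ℝ → ℝ} (hF : Continuous F.uncurry) (hG : Continuous G.uncurry) :
    dblInt r0 (fun θ r => F θ r + G θ r) = dblInt r0 F + dblInt r0 G := by
  have integrable_slice {H : ℝ → ℝ → ℝ} (hH : Continuous H.uncurry) (r : ℝ) :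
      IntervalIntegrable (fun θ => H θ r) volume 0 (2 * π) :=
    (hH.uncurry_right r).intervalIntegrable _ _
  have integrable_inner {H : ℝ → ℝ → ℝ} (hH : Continuous H.uncurry) :
      IntervalIntegrable (fun r => ∫ θ in (0 : ℝ)..(2 * π), H θ r) volume r0 1 :=
    (intervalIntegral.continuous_parametric_intervalIntegral_of_continuous'
      (f := fun r θ => H θ r) (hH.comp continuous_swap) _ _).intervalIntegrable _ _
  simp only [dblInt, intervalIntegral.integral_add (integrable_slice hF _) (integrable_slice hG _),
    intervalIntegral.integral_add (integrable_inner hF) (integrable_inner hG)]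

theorem integral_sq_le_dblInt_Dr_sq (hu : ContDiff ℝ 1 u.uncurry) (hb : ∀ θ, u θ r0 = 0) {r : ℝ}
    (hr : r ∈ Icc r0 1) :
    ∫ θ in (0 : ℝ)..(2 * π), u θ r ^ 2 ≤ (1 - r0) * dblInt r0 (fun θ r => Dr u θ r ^ 2) := by
  simpa only [norm_eq_abs, sq_abs] using! integral_norm_sq_le_integral_norm_deriv_sq two_pi_pos.le
    (fun θ s _ => hasDerivAt_Dr hu one_ne_zero θ s) (contDiff_Dr (m := 0) hu (by simp)).continuous
    hb hr

theorem sq_le_dblInt_Dr_sq_add (hu : ContDiff ℝ 2 u.uncurry) (hper : Periodic2 u)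
    (hb : ∀ θ, u θ r0 = 0) (θ : ℝ) {r : ℝ} (hr : r ∈ Icc r0 1) :
    u θ r ^ 2 ≤ 4 * π * (1 - r0) *
      (dblInt r0 (fun θ r => Dr u θ r ^ 2) + dblInt r0 (fun θ r => Dr (Dθ u) θ r ^ 2)) := by
  have hr0 : r0 ≤ 1 := hr.1.trans hr.2
  have huθ : ContDiff ℝ 1 (Dθ u).uncurry := contDiff_Dθ hu one_add_one_eq_two.le
  have hbθ : ∀ t, Dθ u t r0 = 0 := fun t => by simp only [Dθ, hb, deriv_const]
  obtain ⟨x, hx, hux : u θ r = u x r⟩ :=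
    Function.Periodic.exists_mem_Ico₀ (f := fun t => u t r) (fun t => hper t r) two_pi_pos θ
  have circle : 2 * π * u x r ^ 2 ≤ 2 * ((∫ t in (0 : ℝ)..(2 * π), u t r ^ 2) +
      (2 * π) ^ 2 * ∫ t in (0 : ℝ)..(2 * π), Dθ u t r ^ 2) := by
    simpa only [norm_eq_abs, sq_abs, sub_zero] using mul_norm_sq_le_integral_norm_sq_add
      (fun t _ => hasDerivAt_Dθ hu two_ne_zero t r) (huθ.continuous.uncurry_right r).continuousOn
      (Ico_subset_Icc_self hx)
  have slice := integral_sq_le_dblInt_Dr_sq (hu.of_le one_le_two) hb hr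
  have slice_θ := integral_sq_le_dblInt_Dr_sq huθ hbθ hr
  set A := dblInt r0 (fun θ r => Dr u θ r ^ 2)
  set B := dblInt r0 (fun θ r => Dr (Dθ u) θ r ^ 2)
  have hA : 0 ≤ (1 - r0) * A :=
    mul_nonneg (sub_nonneg.2 hr0) (dblInt_nonneg hr0 fun _ _ => sq_nonneg _)
  have hπ : 1 ≤ 2 * π := by linarith [pi_gt_three]
  rw [hux]
  refine le_of_mul_le_mul_left ?_ two_pi_pos
  calc 2 * π * u x r ^ 2 ≤ 2 * ((1 - r0) * A + (2 * π) ^ 2 * ((1 - r0) * B)) := by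
        refine circle.trans ?_
        gcongr
    _ ≤ 2 * ((2 * π) ^ 2 * ((1 - r0) * A) + (2 * π) ^ 2 * ((1 - r0) * B)) := by
        linarith [le_mul_of_one_le_left hA (one_le_pow₀ (n := 2) hπ)]
    _ = 2 * π * (4 * π * (1 - r0) * (A + B)) := by ring

theorem sq_add_sq_le_dblInt_Dr_sq_add (hu : ContDiff ℝ 2 u.uncurry) (hv : ContDiff ℝ 2 v.uncurry)
    (hu_per : Periodic2 u) (hv_per : Periodic2 v) (hub : ∀ θ, u θ r0 = 0) (hvb : ∀ θ, v θ r0 = 0)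
    (θ : ℝ) {r : ℝ} (hr : r ∈ Icc r0 1) :
    u θ r ^ 2 + v θ r ^ 2 ≤ 4 * π * (1 - r0) *
      (dblInt r0 (fun x y => Dr u x y ^ 2 + Dr v x y ^ 2) +
        dblInt r0 (fun x y => Dr (Dθ u) x y ^ 2 + Dr (Dθ v) x y ^ 2)) := by
  have cont_Dr {w : ℝ → ℝ → ℝ} (hw : ContDiff ℝ 2 w.uncurry) :
      Continuous (fun x y => Dr w x y ^ 2).uncurry :=
    (contDiff_Dr (m := 1) hw one_add_one_eq_two.le).continuous.pow 2
  have cont_DrDθ {w : ℝ → ℝ → ℝ} (hw : ContDiff ℝ 2 w.uncurry) :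
      Continuous (fun x y => Dr (Dθ w) x y ^ 2).uncurry :=
    (contDiff_Dr (m := 0) (contDiff_Dθ (m := 1) hw one_add_one_eq_two.le)
      (by simp)).continuous.pow 2
  rw [dblInt_add (cont_Dr hu) (cont_Dr hv), dblInt_add (cont_DrDθ hu) (cont_DrDθ hv)]
  linarith [sq_le_dblInt_Dr_sq_add hu hu_per hub θ hr, sq_le_dblInt_Dr_sq_add hv hv_per hvb θ hr]

theorem anisotropic_sobolev_embedding_general (hu : ContDiff ℝ 2 u.uncurry)
    (hv : ContDiff ℝ 2 v.uncurry) (hu_per : Periodic2 u) (hv_per : Periodic2 v)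
    (hub : ∀ θ, u θ r0 = 0) (hvb : ∀ θ, v θ r0 = 0) (θ : ℝ) {r : ℝ} (hr : r ∈ Icc r0 1) :
    max |u θ r| |v θ r| ≤ √(4 * π * (1 - r0)) *
      (√(dblInt r0 (fun x y => Dr u x y ^ 2 + Dr v x y ^ 2)) +
        √(dblInt r0 (fun x y => Dr (Dθ u) x y ^ 2 + Dr (Dθ v) x y ^ 2))) := by
  have hr0 : r0 ≤ 1 := hr.1.trans hr.2
  have hK : 0 ≤ 4 * π * (1 - r0) := mul_nonneg (by positivity) (sub_nonneg.2 hr0)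
  have hA : 0 ≤ dblInt r0 (fun x y => Dr u x y ^ 2 + Dr v x y ^ 2) :=
    dblInt_nonneg hr0 fun _ _ => by positivity
  have hB : 0 ≤ dblInt r0 (fun x y => Dr (Dθ u) x y ^ 2 + Dr (Dθ v) x y ^ 2) :=
    dblInt_nonneg hr0 fun _ _ => by positivity
  calc max |u θ r| |v θ r| ≤ √(u θ r ^ 2 + v θ r ^ 2) :=
        max_le (abs_le_sqrt (le_add_of_nonneg_right (sq_nonneg _)))
          (abs_le_sqrt (le_add_of_nonneg_left (sq_nonneg _)))
    _ ≤ √(4 * π * (1 - r0) * _) :=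
        sqrt_le_sqrt (sq_add_sq_le_dblInt_Dr_sq_add hu hv hu_per hv_per hub hvb θ hr)
    _ ≤ √(4 * π * (1 - r0)) * (√_ + √_) := by
        rw [sqrt_mul hK]
        gcongr
        exact sqrt_add_le_add_sqrt hA hB

end Annulus

/-- **Anisotropic Sobolev embedding** on the annulus `Ω = [0,2π] × [r₀,1]`:
for smooth `2π`-periodic `(u,v)` vanishing on both boundary circles,
`‖(u,v)‖_∞ ≤ C(‖(u_θ,v_θ)‖₂ + ‖(u_r,v_r)‖₂ + ‖(u_rθ,v_rθ)‖₂)`. -/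
theorem anisotropic_sobolev_embedding
    (r0 : ℝ) (hr0 : 0 < r0) (hr01 : r0 < 1) :
    ∃ C : ℝ, 0 < C ∧
      ∀ u v : ℝ → ℝ → ℝ,
        Smooth2 u → Smooth2 v → Periodic2 u → Periodic2 v →
        (∀ θ, u θ 1 = 0) → (∀ θ, v θ 1 = 0) →
        (∀ θ, u θ r0 = 0) → (∀ θ, v θ r0 = 0) →
        ∀ θ r : ℝ, r ∈ Icc r0 1 →
          max |u θ r| |v θ r| ≤
            C * (Real.sqrt (dblInt r0 (fun x y => (Dθ u x y) ^ 2 + (Dθ v x y) ^ 2))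
              + Real.sqrt (dblInt r0 (fun x y => (Dr u x y) ^ 2 + (Dr v x y) ^ 2))
              + Real.sqrt (dblInt r0 (fun x y => (Dr (Dθ u) x y) ^ 2 + (Dr (Dθ v) x y) ^ 2))) := by
  refine ⟨√(4 * π * (1 - r0)), sqrt_pos.2 (mul_pos (by positivity) (sub_pos.2 hr01)), ?_⟩
  intro u v hu hv hu_per hv_per _ _ hub hvb θ r hr
  refine (anisotropic_sobolev_embedding_general (hu.of_le ENat.LEInfty.out)
    (hv.of_le ENat.LEInfty.out) hu_per hv_per hub hvb θ hr).trans ?_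
  gcongr
  exact le_add_of_nonneg_left (sqrt_nonneg _)
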